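/- Let ε, μ > 0 be constants, let ω ⊆ ℝ³ be open, let φ_b, φ_t : ω → ℝ be twice continuously differentiable with φ_b(x) < φ_t(x) for all x ∈ ω, and set φ(x,t̂) = (1−t̂)φ_b(x)+t̂φ_t(x), δ = φ_t − φ_b, Φ(x,t̂) = (x, φ(x,t̂)). Suppose u = (E,H) : K° → ℝ⁶ is continuously differentiable and solves the Maxwell system ∂ₜ(εE) = ∇×H, ∂ₜ(μH) = −∇×E on the open tent K° = {(x,t) : x ∈ ω, φ_b(x) < t < φ_t(x)}. Then û = u ∘ Φ satisfies the transformed equation ∂_{t̂}( g(û) − f(û)∇_xφ ) + div_x( δ f(û) ) = 0 on ω × (0,1), where g(û) = (εÊ, μĤ), f(û) ∈ ℝ^{6×3} has upper block −skew Ĥ and lower block skew Ê, f(û)∇_xφ denotes the matrix–vector product, and div_x is the row-wise spatial divergence. -/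

import Mathlib

/-- Partial derivative in direction `j` of a scalar field on `ℝ³`. -/
noncomputable def pd3 (j : Fin 3) (f : (Fin 3 → ℝ) → ℝ) (x : Fin 3 → ℝ) : ℝ :=
  fderiv ℝ f x (Pi.single j 1)

/-- The skew matrix of a vector `v ∈ ℝ³`, with rows `(0, v₃, −v₂)`, `(−v₃, 0, v₁)`,
`(v₂, −v₁, 0)`. -/
def skew3 (v : Fin 3 → ℝ) : Matrix (Fin 3) (Fin 3) ℝ :=
  !![0, v 2, -(v 1); -(v 2), 0, v 0; v 1, -(v 0), 0]

/-- The curl of a vector field on `ℝ³`. -/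
noncomputable def curl3 (E : (Fin 3 → ℝ) → (Fin 3 → ℝ)) (x : Fin 3 → ℝ) : Fin 3 → ℝ :=
  ![pd3 1 (fun y => E y 2) x - pd3 2 (fun y => E y 1) x,
    pd3 2 (fun y => E y 0) x - pd3 0 (fun y => E y 2) x,
    pd3 0 (fun y => E y 1) x - pd3 1 (fun y => E y 0) x]

/-- For `u = (E, H)`, the vector `g(u) = (εE, μH) ∈ ℝ⁶`. -/
def gvec (ε μ : ℝ) (E H : Fin 3 → ℝ) : Fin 6 → ℝ :=
  Fin.append (fun i => ε * E i) (fun i => μ * H i)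

/-- For `u = (E, H)`, the `6 × 3` matrix `f(u)` with upper block `−skew H` and lower
block `skew E`. -/
def fmat (E H : Fin 3 → ℝ) : Fin 6 → Fin 3 → ℝ :=
  Fin.append (fun i j => -(skew3 H i j)) (fun i j => skew3 E i j)

/-- The interpolated front `φ(x, t̂) = (1 − t̂) φ_b(x) + t̂ φ_t(x)`. -/
def tentPhi (φb φt : (Fin 3 → ℝ) → ℝ) (x : Fin 3 → ℝ) (t : ℝ) : ℝ :=
  (1 - t) * φb x + t * φt x

/-!
Let `δ = ∂_{t̂}φ` and `Φ(x, t̂) = (x, φ(x, t̂))`. Pulling a density `G` and fluxes `F_j` back along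
`Φ` gives
`∂_{t̂}(G ∘ Φ - ∑ ∂_jφ F_j ∘ Φ) + ∑ ∂_j(δ F_j ∘ Φ) = δ (∂ₜG + ∑ ∂_j F_j) ∘ Φ`.
Here the terms `∂_jφ δ ∂ₜF_j` from the chain rule cancel, and the terms with an undifferentiated
`F_j` cancel because mixed partial derivatives of `φ` commute, which is immediate for the tent
height since it is affine in `t̂`. The rows of Maxwell's system are balance laws
`∂ₜG + ∑ ∂_j F_j = 0`, since the row-wise divergence of the skew matrix of `v` is the curl of `v`.
-/

section Pullback

variable {𝕜 V W ι : Type*} [NontriviallyNormedField 𝕜] [NormedAddCommGroup V] [NormedSpace 𝕜 V]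
  [NormedAddCommGroup W] [NormedSpace 𝕜 W]

/-- The space-time divergence `∂ₜG + ∑ⱼ ∂_{eⱼ} Fⱼ` of a density `G` and fluxes `Fⱼ` along spatial
directions `eⱼ`, with time as the last coordinate. Its vanishing is the balance law for `(G, F)`. -/
noncomputable def spacetimeDiv [Fintype ι] (e : ι → V) (G : V × 𝕜 → W) (F : ι → V × 𝕜 → W)
    (p : V × 𝕜) : W :=
  deriv (fun s => G (p.1, s)) p.2 + ∑ j, fderiv 𝕜 (fun y => F j (y, p.2)) p.1 (e j)

theorem hasDerivAt_comp_prodMk_curve {K : V × 𝕜 → W} {h : 𝕜 → 𝕜} {h' t : 𝕜} {x : V}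
    (hK : DifferentiableAt 𝕜 K (x, h t)) (hh : HasDerivAt h h' t) :
    HasDerivAt (fun s => K (x, h s)) (h' • deriv (fun s => K (x, s)) (h t)) t := by
  have hslice : DifferentiableAt 𝕜 (fun s => K (x, s)) (h t) :=
    hK.comp (h t) (hasFDerivAt_prodMk_right x (h t)).differentiableAt
  exact hslice.hasDerivAt.scomp t hh

theorem hasFDerivAt_comp_graph {K : V × 𝕜 → W} {h : V → 𝕜} {h' : V →L[𝕜] 𝕜} {x : V}
    (hK : DifferentiableAt 𝕜 K (x, h x)) (hh : HasFDerivAt h h' x) :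
    HasFDerivAt (fun y => K (y, h y))
      (fderiv 𝕜 (fun y => K (y, h x)) x + h'.smulRight (deriv (fun s => K (x, s)) (h x))) x := by
  have hspace : fderiv 𝕜 (fun y => K (y, h x)) x = fderiv 𝕜 K (x, h x) ∘L .inl 𝕜 V 𝕜 :=
    (hK.hasFDerivAt.comp x (hasFDerivAt_prodMk_left x (h x))).fderiv
  have htime : deriv (fun s => K (x, s)) (h x) = fderiv 𝕜 K (x, h x) (0, 1) :=
    (hK.hasFDerivAt.comp (h x) (hasFDerivAt_prodMk_right x (h x))).hasDerivAt.deriv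
  refine (hK.hasFDerivAt.comp x ((hasFDerivAt_id x).prodMk hh)).congr_fderiv ?_
  ext v
  have hsplit : ((v, h' v) : V × 𝕜) = (v, 0) + h' v • (0, 1) := by simp
  change fderiv 𝕜 K (x, h x) (v, h' v) = _
  rw [hsplit, map_add, map_smul, hspace, htime]
  rfl

theorem fderiv_smul_comp_graph {K : V × 𝕜 → W} {h δ : V → 𝕜} {x : V}
    (hK : DifferentiableAt 𝕜 K (x, h x)) (hh : DifferentiableAt 𝕜 h x)
    (hδ : DifferentiableAt 𝕜 δ x) (v : V) :
    fderiv 𝕜 (fun y => δ y • K (y, h y)) x v =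
      δ x • (fderiv 𝕜 (fun y => K (y, h x)) x v
        + fderiv 𝕜 h x v • deriv (fun s => K (x, s)) (h x)) + fderiv 𝕜 δ x v • K (x, h x) := by
  have hcomp := hasFDerivAt_comp_graph hK hh.hasFDerivAt
  rw [fderiv_fun_smul hδ hcomp.differentiableAt, hcomp.fderiv]
  rfl

theorem spacetimeDiv_pullback [Fintype ι] (e : ι → V) {G : V × 𝕜 → W} {F : ι → V × 𝕜 → W}
    {φ : V → 𝕜 → 𝕜} {δ : V → 𝕜} {x : V} {t : 𝕜}
    (hG : DifferentiableAt 𝕜 G (x, φ x t)) (hF : ∀ j, DifferentiableAt 𝕜 (F j) (x, φ x t))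
    (hφ : DifferentiableAt 𝕜 (fun y => φ y t) x) (hφδ : HasDerivAt (φ x) (δ x) t)
    (hδ : DifferentiableAt 𝕜 δ x)
    (hmixed : HasDerivAt (fun s => fderiv 𝕜 (fun y => φ y s) x) (fderiv 𝕜 δ x) t) :
    spacetimeDiv e
        (fun p => G (p.1, φ p.1 p.2)
          - ∑ j, fderiv 𝕜 (fun y => φ y p.2) p.1 (e j) • F j (p.1, φ p.1 p.2))
        (fun j p => δ p.1 • F j (p.1, φ p.1 p.2)) (x, t) =
      δ x • spacetimeDiv e G F (x, φ x t) := by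
  have hslope (j : ι) : HasDerivAt (fun s => fderiv 𝕜 (fun y => φ y s) x (e j))
      (fderiv 𝕜 δ x (e j)) t := by
    simpa using hmixed.clm_apply (hasDerivAt_const t (e j))
  have hdensity := (hasDerivAt_comp_prodMk_curve hG hφδ).fun_sub
    (HasDerivAt.fun_sum (u := Finset.univ) fun j _ =>
      (hslope j).fun_smul (hasDerivAt_comp_prodMk_curve (hF j) hφδ))
  have hflux (j : ι) := fderiv_smul_comp_graph (h := fun y => φ y t) (hF j) hφ hδ (e j)
  simp only [spacetimeDiv, hdensity.deriv, hflux, Finset.sum_add_distrib, smul_add,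
    Finset.smul_sum, smul_comm (δ x) (fderiv 𝕜 (fun y => φ y t) x _)]
  abel

end Pullback

section TentHeight

variable {φb φt : (Fin 3 → ℝ) → ℝ} {x : Fin 3 → ℝ} {t : ℝ}

theorem tentPhi_mem_Ioo (hlt : φb x < φt x) (ht : t ∈ Set.Ioo (0 : ℝ) 1) :
    tentPhi φb φt x t ∈ Set.Ioo (φb x) (φt x) := by
  rw [← openSegment_eq_Ioo hlt]
  exact ⟨1 - t, t, sub_pos.2 ht.2, ht.1, sub_add_cancel 1 t, rfl⟩

theorem tentPhi_eq_lineMap (φb φt : (Fin 3 → ℝ) → ℝ) (x : Fin 3 → ℝ) :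
    tentPhi φb φt x = AffineMap.lineMap (φb x) (φt x) := by
  funext t
  exact (AffineMap.lineMap_apply_module (φb x) (φt x) t).symm

theorem hasDerivAt_tentPhi (φb φt : (Fin 3 → ℝ) → ℝ) (x : Fin 3 → ℝ) (t : ℝ) :
    HasDerivAt (tentPhi φb φt x) (φt x - φb x) t := by
  rw [tentPhi_eq_lineMap]
  exact AffineMap.hasDerivAt_lineMap

theorem hasFDerivAt_tentPhi (hb : DifferentiableAt ℝ φb x) (ht : DifferentiableAt ℝ φt x) (t : ℝ) :
    HasFDerivAt (fun y => tentPhi φb φt y t)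
      (AffineMap.lineMap (fderiv ℝ φb x) (fderiv ℝ φt x) t) x := by
  rw [AffineMap.lineMap_apply_module]
  exact (hb.hasFDerivAt.const_mul (1 - t)).fun_add (ht.hasFDerivAt.const_mul t)

theorem hasDerivAt_fderiv_tentPhi (hb : DifferentiableAt ℝ φb x) (ht : DifferentiableAt ℝ φt x)
    (t : ℝ) :
    HasDerivAt (fun s => fderiv ℝ (fun y => tentPhi φb φt y s) x)
      (fderiv ℝ (fun y => φt y - φb y) x) t := by
  simp only [fun s => (hasFDerivAt_tentPhi hb ht s).fderiv, fderiv_fun_sub ht hb]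
  exact AffineMap.hasDerivAt_lineMap

end TentHeight

section Maxwell

theorem pd3_neg (j : Fin 3) (f : (Fin 3 → ℝ) → ℝ) (x : Fin 3 → ℝ) :
    pd3 j (fun y => -f y) x = -pd3 j f x := by
  simp only [pd3, fderiv_fun_neg, neg_apply]

theorem pd3_const (j : Fin 3) (c : ℝ) (x : Fin 3 → ℝ) : pd3 j (fun _ => c) x = 0 := by
  simp only [pd3, fderiv_fun_const, Pi.zero_apply, zero_apply]

theorem sum_pd3_skew3 (v : (Fin 3 → ℝ) → Fin 3 → ℝ) (x : Fin 3 → ℝ) (i : Fin 3) :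
    ∑ j, pd3 j (fun y => skew3 (v y) i j) x = curl3 v x i := by
  fin_cases i <;>
    simp [skew3, curl3, pd3_neg, pd3_const, Fin.sum_univ_three, sub_eq_add_neg, add_comm]

theorem sum_pd3_neg_skew3 (v : (Fin 3 → ℝ) → Fin 3 → ℝ) (x : Fin 3 → ℝ) (i : Fin 3) :
    ∑ j, pd3 j (fun y => -skew3 (v y) i j) x = -curl3 v x i := by
  simp only [← sum_pd3_skew3, pd3_neg, Finset.sum_neg_distrib]

theorem spacetimeDiv_gvec_fmat_eq_zero {ε μ : ℝ} {E H : (Fin 3 → ℝ) × ℝ → Fin 3 → ℝ}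
    {x : Fin 3 → ℝ} {t : ℝ}
    (hMaxwell : ∀ i : Fin 3,
      deriv (fun s => ε * E (x, s) i) t = curl3 (fun y => H (y, t)) x i ∧
      deriv (fun s => μ * H (x, s) i) t = -curl3 (fun y => E (y, t)) x i) (r : Fin 6) :
    spacetimeDiv (fun j : Fin 3 => Pi.single j 1) (fun p => gvec ε μ (E p) (H p) r)
      (fun j p => fmat (E p) (H p) r j) (x, t) = 0 := by
  refine Fin.addCases (m := 3) (n := 3) (fun i => ?electric) (fun i => ?magnetic) r
  case electric =>
    simp only [spacetimeDiv, gvec, fmat, Fin.append_left, (hMaxwell i).1]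
    exact add_eq_zero_iff_eq_neg'.2 (sum_pd3_neg_skew3 (fun y => H (y, t)) x i)
  case magnetic =>
    simp only [spacetimeDiv, gvec, fmat, Fin.append_right, (hMaxwell i).2]
    exact neg_add_eq_zero.2 (sum_pd3_skew3 (fun y => E (y, t)) x i).symm

variable {X : Type*} [NormedAddCommGroup X] [NormedSpace ℝ X] {E H : X → Fin 3 → ℝ} {p : X}

theorem differentiableAt_gvec (ε μ : ℝ) (hE : DifferentiableAt ℝ E p)
    (hH : DifferentiableAt ℝ H p) (r : Fin 6) :
    DifferentiableAt ℝ (fun q => gvec ε μ (E q) (H q) r) p := by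
  refine Fin.addCases (m := 3) (n := 3) (fun i => ?_) (fun i => ?_) r
  · simpa only [gvec, Fin.append_left] using (differentiableAt_pi.1 hE i).const_mul ε
  · simpa only [gvec, Fin.append_right] using (differentiableAt_pi.1 hH i).const_mul μ

theorem differentiableAt_skew3 {v : X → Fin 3 → ℝ} (hv : DifferentiableAt ℝ v p) (i j : Fin 3) :
    DifferentiableAt ℝ (fun q => skew3 (v q) i j) p := by
  fin_cases i <;> fin_cases j <;> simp [skew3, differentiableAt_pi.1 hv]

theorem differentiableAt_fmat (hE : DifferentiableAt ℝ E p) (hH : DifferentiableAt ℝ H p)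
    (r : Fin 6) (j : Fin 3) : DifferentiableAt ℝ (fun q => fmat (E q) (H q) r j) p := by
  refine Fin.addCases (m := 3) (n := 3) (fun i => ?_) (fun i => ?_) r
  · simpa only [fmat, Fin.append_left] using (differentiableAt_skew3 hH i j).fun_neg
  · simpa only [fmat, Fin.append_right] using differentiableAt_skew3 hE i j

end Maxwell

theorem maxwell_mapped_tent_equation_general (ε μ : ℝ) {φb φt : (Fin 3 → ℝ) → ℝ}
    {x : Fin 3 → ℝ} {t : ℝ} (hb : DifferentiableAt ℝ φb x) (ht : DifferentiableAt ℝ φt x)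
    {E H : (Fin 3 → ℝ) × ℝ → (Fin 3 → ℝ)}
    (hE : DifferentiableAt ℝ E (x, tentPhi φb φt x t))
    (hH : DifferentiableAt ℝ H (x, tentPhi φb φt x t))
    (hMaxwell : ∀ i : Fin 3,
      deriv (fun s => ε * E (x, s) i) (tentPhi φb φt x t) =
        curl3 (fun y => H (y, tentPhi φb φt x t)) x i ∧
      deriv (fun s => μ * H (x, s) i) (tentPhi φb φt x t) =
        -curl3 (fun y => E (y, tentPhi φb φt x t)) x i) (r : Fin 6) :
    deriv (fun s =>
        gvec ε μ (E (x, tentPhi φb φt x s)) (H (x, tentPhi φb φt x s)) r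
          - ∑ j : Fin 3,
              fmat (E (x, tentPhi φb φt x s)) (H (x, tentPhi φb φt x s)) r j
                * fderiv ℝ (fun y => tentPhi φb φt y s) x (Pi.single j 1)) t
      + ∑ j : Fin 3, pd3 j (fun y =>
          (φt y - φb y)
            * fmat (E (y, tentPhi φb φt y t)) (H (y, tentPhi φb φt y t)) r j) x
      = 0 := by
  have hpullback := spacetimeDiv_pullback (fun j : Fin 3 => Pi.single j 1)
    (differentiableAt_gvec ε μ hE hH r) (differentiableAt_fmat hE hH r)
    (hasFDerivAt_tentPhi hb ht t).differentiableAt (hasDerivAt_tentPhi φb φt x t)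
    (ht.fun_sub hb) (hasDerivAt_fderiv_tentPhi hb ht t)
  rw [spacetimeDiv_gvec_fmat_eq_zero hMaxwell, smul_zero] at hpullback
  simp only [mul_comm (fmat _ _ _ _)]
  exact hpullback

/-- If `u = (E, H)` is a `C¹` solution of the Maxwell system `∂ₜ(εE) = ∇×H`,
`∂ₜ(μH) = −∇×E` on the open tent `K°` over an open set `ω` (with `C²` fronts
`φ_b < φ_t`), then the pullback `û = u ∘ Φ` satisfies the transformed equation
`∂_{t̂}( g(û) − f(û)∇_xφ ) + div_x( δ f(û) ) = 0` on `ω × (0,1)`, row-wise. -/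
theorem maxwell_mapped_tent_equation (ε μ : ℝ) (hε : 0 < ε) (hμ : 0 < μ)
    (ω : Set (Fin 3 → ℝ)) (hω : IsOpen ω)
    (φb φt : (Fin 3 → ℝ) → ℝ)
    (hb : ∀ x ∈ ω, ContDiffAt ℝ 2 φb x)
    (ht : ∀ x ∈ ω, ContDiffAt ℝ 2 φt x)
    (hlt : ∀ x ∈ ω, φb x < φt x)
    (E H : (Fin 3 → ℝ) × ℝ → (Fin 3 → ℝ))
    (hEreg : ∀ p : (Fin 3 → ℝ) × ℝ,
      p.1 ∈ ω → φb p.1 < p.2 → p.2 < φt p.1 → ContDiffAt ℝ 1 E p)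
    (hHreg : ∀ p : (Fin 3 → ℝ) × ℝ,
      p.1 ∈ ω → φb p.1 < p.2 → p.2 < φt p.1 → ContDiffAt ℝ 1 H p)
    (hMaxwell : ∀ (x : Fin 3 → ℝ) (t : ℝ), x ∈ ω → φb x < t → t < φt x →
      ∀ i : Fin 3,
        deriv (fun s => ε * E (x, s) i) t = curl3 (fun y => H (y, t)) x i ∧
        deriv (fun s => μ * H (x, s) i) t = -curl3 (fun y => E (y, t)) x i) :
    ∀ x ∈ ω, ∀ t ∈ Set.Ioo (0 : ℝ) 1, ∀ r : Fin 6,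
      deriv (fun s =>
          gvec ε μ (E (x, tentPhi φb φt x s)) (H (x, tentPhi φb φt x s)) r
            - ∑ j : Fin 3,
                fmat (E (x, tentPhi φb φt x s)) (H (x, tentPhi φb φt x s)) r j
                  * fderiv ℝ (fun y => tentPhi φb φt y s) x (Pi.single j 1)) t
        + ∑ j : Fin 3, pd3 j (fun y =>
            (φt y - φb y)
              * fmat (E (y, tentPhi φb φt y t)) (H (y, tentPhi φb φt y t)) r j) x
        = 0 := by
  intro x hx t htt
  obtain ⟨hbelow, habove⟩ := tentPhi_mem_Ioo (hlt x hx) htt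
  exact maxwell_mapped_tent_equation_general ε μ
    ((hb x hx).differentiableAt two_ne_zero) ((ht x hx).differentiableAt two_ne_zero)
    ((hEreg _ hx hbelow habove).differentiableAt one_ne_zero)
    ((hHreg _ hx hbelow habove).differentiableAt one_ne_zero) (hMaxwell x _ hx hbelow habove)
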